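/- Let λ₂ and λ_N be real numbers with -1 ≤ λ_N ≤ λ₂ < 1, and for a > -1 define c(a) = max(|λ₂ + a|, |λ_N + a|)/(1 + a). Then for every a > -1, c(a) ≥ (λ₂ - λ_N)/(2 - λ₂ - λ_N), and equality holds at a = -(λ₂ + λ_N)/2. In other words, the choice a = -(λ₂ + λ_N)/2 minimizes c over (-1, ∞), with minimum value (λ₂ - λ_N)/(2 - λ₂ - λ_N). -/

import Mathlib

section LinearOrderedRing

variable {R : Type*} [CommRing R] [LinearOrder R] [IsStrictOrderedRing R] {x y μ : R}

theorem abs_sub_mul_abs_add_le_max_abs_add_mul (hx : x ≤ μ) (hy : y ≤ μ) (a : R) :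
    |x - y| * |μ + a| ≤ max |x + a| |y + a| * (2 * μ - x - y) := by
  have hx' : 0 ≤ μ - x := sub_nonneg.2 hx
  have hy' : 0 ≤ μ - y := sub_nonneg.2 hy
  calc
    |x - y| * |μ + a| = |(μ - y) * (x + a) - (μ - x) * (y + a)| := by
      -- The weights `μ - y` and `μ - x` are those for which `μ + a` factors out.
      rw [← abs_mul]
      congr 1
      ring
    _ ≤ |(μ - y) * (x + a)| + |(μ - x) * (y + a)| := abs_sub _ _
    _ = (μ - y) * |x + a| + (μ - x) * |y + a| := by
      rw [abs_mul, abs_mul, abs_of_nonneg hx', abs_of_nonneg hy']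
    _ ≤ (μ - y) * max |x + a| |y + a| + (μ - x) * max |x + a| |y + a| := by
      gcongr
      · exact le_max_left _ _
      · exact le_max_right _ _
    _ = max |x + a| |y + a| * (2 * μ - x - y) := by ring

end LinearOrderedRing

section LinearOrderedField

variable {K : Type*} [Field K] [LinearOrder K] [IsStrictOrderedRing K]

theorem max_abs_add_neg_midpoint (x y : K) :
    max |x + -(x + y) / 2| |y + -(x + y) / 2| = |x - y| / 2 := by
  have hx : x + -(x + y) / 2 = (x - y) / 2 := by ring
  have hy : y + -(x + y) / 2 = -((x - y) / 2) := by ring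
  rw [hx, hy, abs_neg, max_self, abs_div, abs_two]

theorem optimal_shift_minimizes_c_general {x y μ : K} (hx : x < μ) (hy : y < μ) :
    (∀ a : K, -μ < a →
      |x - y| / (2 * μ - x - y) ≤ max |x + a| |y + a| / (μ + a)) ∧
    max |x + -(x + y) / 2| |y + -(x + y) / 2| / (μ + -(x + y) / 2) =
      |x - y| / (2 * μ - x - y) := by
  refine ⟨fun a ha => ?_, ?_⟩
  · have hgap : 0 < 2 * μ - x - y := by linarith
    have hshift : 0 < μ + a := neg_lt_iff_pos_add'.1 ha
    rw [div_le_div_iff₀ hgap hshift]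
    simpa only [abs_of_pos hshift] using
      abs_sub_mul_abs_add_le_max_abs_add_mul hx.le hy.le a
  · have hshift : μ + -(x + y) / 2 = (2 * μ - x - y) / 2 := by ring
    rw [max_abs_add_neg_midpoint, hshift, div_div_div_cancel_right₀ two_ne_zero]

end LinearOrderedField

/-- Optimal shifting: for `-1 ≤ λ_N ≤ λ₂ < 1`, the quantity
`c(a) = max(|λ₂ + a|, |λ_N + a|)/(1 + a)` over `a > -1` is minimized at
`a = -(λ₂ + λ_N)/2`, with minimum value `(λ₂ - λ_N)/(2 - λ₂ - λ_N)`. -/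
theorem optimal_shift_minimizes_c (lam₂ lamN : ℝ)
    (h₁ : -1 ≤ lamN) (h₂ : lamN ≤ lam₂) (h₃ : lam₂ < 1) :
    (∀ a : ℝ, -1 < a →
      (lam₂ - lamN) / (2 - lam₂ - lamN) ≤ max |lam₂ + a| |lamN + a| / (1 + a)) ∧
    max |lam₂ + (-(lam₂ + lamN) / 2)| |lamN + (-(lam₂ + lamN) / 2)| /
        (1 + (-(lam₂ + lamN) / 2)) =
      (lam₂ - lamN) / (2 - lam₂ - lamN) := by
  simpa only [mul_one, abs_of_nonneg (sub_nonneg.2 h₂)] using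
    optimal_shift_minimizes_c_general h₃ (h₂.trans_lt h₃)
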